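/- arXiv:1811.05165 — 3 statements merged into one kernel-verified Lean document; each statement's English description precedes it below -/
import Mathlib

section
/- Let α > 0, T > 0, a ∈ ℝ, and let h : [0,T] → ℝ be continuous. Then for every t ∈ (0,T], the weakly singular integral ∫_0^t U*(0, t−s) h(s) ds = ∫_0^t (α/(4π(t−s)))^{1/2} h(s) ds converges absolutely, and the single layer heat potential is continuous across the boundary: lim_{x→a} ∫_0^t U*(x−a, t−s) h(s) ds = ∫_0^t U*(0, t−s) h(s) ds. -/
/-!
For fixed `τ` the heat kernel is continuous in `z`, and
`U*(z,τ) = exp (-α z² / (4τ)) · U*(0,τ)` is dominated by `U*(0,τ)`, a multiple of `τ ^ (-1/2)`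
for `τ > 0`. This singularity is integrable, so it dominates all the integrands at once whenever
the density is bounded, and dominated convergence makes the potential continuous in `z`.
-/

open MeasureTheory Real Filter intervalIntegral Topology

/-- The fundamental solution of the one-dimensional heat equation with heat
capacity constant `α`: `U*(z,τ) = (α/(4πτ))^{1/2} · exp(−α z²/(4τ))` for `τ > 0`,
and `U*(z,τ) = 0` otherwise. -/
noncomputable def Ustar (α z τ : ℝ) : ℝ :=
  if 0 < τ then Real.sqrt (α / (4 * Real.pi * τ)) * Real.exp (-(α * z ^ 2) / (4 * τ)) else 0

lemma memLp_top_restrict_of_continuousOn_isCompact {X E : Type*} [TopologicalSpace X]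
    [MeasurableSpace X] [OpensMeasurableSpace X] [NormedAddCommGroup E] {μ : Measure X}
    {K s : Set X} {f : X → E} (hf : ContinuousOn f K) (hK : IsCompact K) (hKm : MeasurableSet K)
    (hsK : s ⊆ K) : MemLp f ⊤ (μ.restrict s) := by
  obtain ⟨C, hC⟩ := hK.exists_bound_of_continuousOn hf
  have hfK : MemLp f ⊤ (μ.restrict K) :=
    memLp_top_of_bound (hf.aestronglyMeasurable_of_isCompact hK hKm) C
      (ae_restrict_of_forall_mem hKm hC)
  exact hfK.mono_measure (Measure.restrict_mono_set μ hsK)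

section Kernel

variable (α z τ : ℝ)

lemma Ustar_eq_exp_mul_Ustar_zero :
    Ustar α z τ = exp (-(α * z ^ 2) / (4 * τ)) * Ustar α 0 τ := by
  simp [Ustar, mul_comm]

lemma measurable_Ustar : Measurable (Ustar α z) :=
  .ite measurableSet_Ioi (by fun_prop) measurable_const

lemma continuous_Ustar : Continuous fun z => Ustar α z τ := by
  unfold Ustar
  split_ifs <;> fun_prop

variable {α} in
lemma norm_Ustar_le_norm_Ustar_zero (hα : 0 ≤ α) : ‖Ustar α z τ‖ ≤ ‖Ustar α 0 τ‖ := by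
  rcases le_or_gt τ 0 with hτ | hτ
  · simp [Ustar, hτ.not_gt]
  · have hexp : exp (-(α * z ^ 2) / (4 * τ)) ≤ 1 :=
      exp_le_one_iff.2 <|
        div_nonpos_of_nonpos_of_nonneg (neg_nonpos.2 (by positivity)) (by positivity)
    rw [Ustar_eq_exp_mul_Ustar_zero, norm_mul, norm_of_nonneg (exp_nonneg _)]
    exact mul_le_of_le_one_left (norm_nonneg _) hexp

variable {τ} in
lemma Ustar_zero_eq_mul_rpow (hτ : 0 < τ) :
    Ustar α 0 τ = √(α / (4 * π)) * τ ^ (-(1 / 2) : ℝ) := by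
  rw [rpow_neg hτ.le, ← sqrt_eq_rpow, ← div_eq_mul_inv, ← sqrt_div' _ hτ.le, div_div]
  simp [Ustar, hτ]

lemma intervalIntegrable_Ustar_zero (a b : ℝ) : IntervalIntegrable (Ustar α 0) volume a b := by
  have hpow : IntervalIntegrable (fun τ => √(α / (4 * π)) * τ ^ (-(1 / 2) : ℝ)) volume a b :=
    (intervalIntegrable_rpow' (by norm_num)).const_mul _
  refine hpow.mono_fun (measurable_Ustar α 0).aestronglyMeasurable (.of_forall fun τ => ?_)
  rcases le_or_gt τ 0 with hτ | hτ
  · simpa [Ustar, hτ.not_gt] using by positivity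
  · simp only [Ustar_zero_eq_mul_rpow α hτ, le_refl]

end Kernel

section SingleLayerPotential

variable {E : Type*} [NormedAddCommGroup E] [NormedSpace ℝ E]

/-- The single layer heat potential `∫_0^t U*(z, t−s) h(s) ds` at time `t` and signed distance `z`
from the boundary, with density `h` taking values in a real normed space. -/
noncomputable def singleLayerPotential (α : ℝ) (h : ℝ → E) (t z : ℝ) : E :=
  ∫ s in (0 : ℝ)..t, Ustar α z (t - s) • h s

variable {α t : ℝ} {h : ℝ → E}

lemma norm_Ustar_smul_le_norm_Ustar_zero_smul (hα : 0 ≤ α) (z τ : ℝ) (v : E) :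
    ‖Ustar α z τ • v‖ ≤ ‖Ustar α 0 τ • v‖ := by
  simp only [norm_smul]
  gcongr
  exact norm_Ustar_le_norm_Ustar_zero z τ hα

lemma intervalIntegrable_Ustar_zero_smul (hh : MemLp h ⊤ (volume.restrict (Set.uIoc 0 t))) :
    IntervalIntegrable (fun s => Ustar α 0 (t - s) • h s) volume 0 t := by
  have hU : IntervalIntegrable (fun s => Ustar α 0 (t - s)) volume 0 t := by
    simpa using (intervalIntegrable_Ustar_zero α t 0).comp_sub_left t
  exact intervalIntegrable_iff.2 (hU.def'.integrable.smul_of_top_left hh)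

lemma intervalIntegrable_Ustar_smul (hα : 0 ≤ α)
    (h_int : IntervalIntegrable (fun s => Ustar α 0 (t - s) • h s) volume 0 t) (z : ℝ) :
    IntervalIntegrable (fun s => Ustar α z (t - s) • h s) volume 0 t := by
  have hmeas : AEStronglyMeasurable (fun s => Ustar α z (t - s) • h s)
      (volume.restrict (Set.uIoc 0 t)) := by
    simp only [Ustar_eq_exp_mul_Ustar_zero α z, mul_smul]
    have hexp : Measurable fun s => exp (-(α * z ^ 2) / (4 * (t - s))) := by fun_prop
    exact hexp.aestronglyMeasurable.smul h_int.aestronglyMeasurable_restrict_uIoc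
  exact h_int.mono_fun hmeas <| .of_forall fun s =>
    norm_Ustar_smul_le_norm_Ustar_zero_smul hα z (t - s) (h s)

lemma continuous_singleLayerPotential (hα : 0 ≤ α)
    (h_int : IntervalIntegrable (fun s => Ustar α 0 (t - s) • h s) volume 0 t) :
    Continuous (singleLayerPotential α h t) :=
  continuous_of_dominated_interval
    (fun z => (intervalIntegrable_Ustar_smul hα h_int z).aestronglyMeasurable_restrict_uIoc)
    (fun z => .of_forall fun s _ =>
      norm_Ustar_smul_le_norm_Ustar_zero_smul hα z (t - s) (h s))
    h_int.norm
    (.of_forall fun s _ => (continuous_Ustar α (t - s)).smul continuous_const)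

theorem single_layer_potential_continuous_across_boundary_general (hα : 0 ≤ α)
    (hh : MemLp h ⊤ (volume.restrict (Set.uIoc 0 t))) :
    (∀ z, IntervalIntegrable (fun s => Ustar α z (t - s) • h s) volume 0 t) ∧
      Continuous (singleLayerPotential α h t) :=
  have h_int := intervalIntegrable_Ustar_zero_smul hh
  ⟨intervalIntegrable_Ustar_smul hα h_int, continuous_singleLayerPotential hα h_int⟩

end SingleLayerPotential

/-- For continuous `h` and `t ∈ (0,T]`, the weakly singular integral
`∫_0^t U*(0, t−s) h(s) ds` converges absolutely, and the single layer heat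
potential is continuous across the boundary:
`lim_{x→a} ∫_0^t U*(x−a, t−s) h(s) ds = ∫_0^t U*(0, t−s) h(s) ds`. -/
theorem single_layer_potential_continuous_across_boundary (α T a : ℝ) (hα : 0 < α) (hT : 0 < T)
    (h : ℝ → ℝ) (hh : ContinuousOn h (Set.Icc 0 T))
    (t : ℝ) (ht : 0 < t) (htT : t ≤ T) :
    IntervalIntegrable (fun s => |Ustar α 0 (t - s) * h s|) volume 0 t ∧
    Tendsto (fun x => ∫ s in (0:ℝ)..t, Ustar α (x - a) (t - s) * h s) (𝓝 a)
      (𝓝 (∫ s in (0:ℝ)..t, Ustar α 0 (t - s) * h s)) := by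
  have hbdd : MemLp h ⊤ (volume.restrict (Set.uIoc 0 t)) :=
    memLp_top_restrict_of_continuousOn_isCompact hh isCompact_Icc measurableSet_Icc <|
      Set.uIoc_subset_uIcc.trans (Set.uIcc_subset_Icc ⟨le_rfl, hT.le⟩ ⟨ht.le, htT⟩)
  obtain ⟨h_int, hcont⟩ :=
    single_layer_potential_continuous_across_boundary_general hα.le hbdd
  refine ⟨(h_int 0).norm, (hcont.comp (continuous_sub_right a)).tendsto' a _ ?_⟩
  simp [singleLayerPotential]
end

section
/- Let α > 0, T > 0, and let h : [0,T] → ℝ be continuous. Then for every t ∈ (0,T], the one-sided limit as z → 0⁺ of ∫_0^t (z/(2(t−s)))·U*(z, t−s) h(s) ds equals (1/2)·h(t). (This is the jump relation of the double layer heat potential across the lateral boundary in one space dimension: since the direct value of the double layer kernel vanishes at the boundary point, the interior Dirichlet trace of the double layer potential produces exactly the jump term (1/2)·h(t).) -/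
/-!
Twice the integrand's kernel, `k_z(τ) = (z/τ) U*(z, τ)`, is an approximate identity on `(0, ∞)` as
`z → 0⁺`. It is nonnegative, it is bounded by a multiple of `z` on each `[δ, ∞)`, and it is
parabolically self-similar, `k_z(τ) = z⁻² k_1(z⁻² τ)`, so that its mass on `(0, δ)` tends to the
total mass of `k_1`. The substitution `τ = u⁻²` turns that total mass into a Gaussian integral equal
to `1`.
-/

open MeasureTheory Real Filter intervalIntegral Topology

/-- The Poisson kernel `-(2/α) ∂U*/∂z` of the heat equation on the half-line `z > 0`, with `τ` the
time elapsed since the boundary value was imposed. It is twice the double layer kernel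
`z / (2τ) * U*`, the factor being chosen so that its total mass over `τ > 0` is `1`. -/
noncomputable def heatPoissonKernel (α z τ : ℝ) : ℝ :=
  z / τ * Ustar α z τ

section Kernel

variable {α z τ δ : ℝ}

lemma Ustar_of_pos (hτ : 0 < τ) :
    Ustar α z τ = √(α / (4 * π * τ)) * rexp (-(α * z ^ 2) / (4 * τ)) :=
  if_pos hτ

lemma Ustar_of_nonpos (hτ : τ ≤ 0) : Ustar α z τ = 0 :=
  if_neg hτ.not_gt

lemma measurable_heatPoissonKernel (α z : ℝ) : Measurable (heatPoissonKernel α z) := by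
  have hU : Measurable (Ustar α z) :=
    Measurable.ite measurableSet_Ioi (by fun_prop) measurable_const
  exact (measurable_const.div measurable_id).mul hU

lemma heatPoissonKernel_nonneg (hz : 0 ≤ z) (τ : ℝ) : 0 ≤ heatPoissonKernel α z τ := by
  rcases le_or_gt τ 0 with hτ | hτ
  · simp [heatPoissonKernel, Ustar_of_nonpos hτ]
  · rw [heatPoissonKernel, Ustar_of_pos hτ]
    positivity

lemma heatPoissonKernel_le (hα : 0 ≤ α) (hz : 0 ≤ z) (hδ : 0 < δ) (hτ : δ ≤ τ) :
    heatPoissonKernel α z τ ≤ z * (√(α / (4 * π * δ)) / δ) := by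
  have hτ₀ : 0 < τ := hδ.trans_le hτ
  have hexp : rexp (-(α * z ^ 2) / (4 * τ)) ≤ 1 :=
    exp_le_one_iff.2 <| div_nonpos_of_nonpos_of_nonneg
      (neg_nonpos.2 (by positivity)) (by positivity)
  calc heatPoissonKernel α z τ
      = z / τ * (√(α / (4 * π * τ)) * rexp (-(α * z ^ 2) / (4 * τ))) := by
        rw [heatPoissonKernel, Ustar_of_pos hτ₀]
    _ ≤ z / δ * (√(α / (4 * π * δ)) * 1) := by gcongr
    _ = z * (√(α / (4 * π * δ)) / δ) := by ring

lemma tendstoUniformlyOn_heatPoissonKernel (hα : 0 ≤ α) (hδ : 0 < δ) :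
    TendstoUniformlyOn (heatPoissonKernel α) 0 (𝓝[>] 0) (Set.Ici δ) := by
  have hbound : Tendsto (fun z : ℝ => z * (√(α / (4 * π * δ)) / δ)) (𝓝[>] 0) (𝓝 0) :=
    ((continuous_mul_const _).tendsto' 0 0 (zero_mul _)).mono_left nhdsWithin_le_nhds
  refine Metric.tendstoUniformlyOn_iff.2 fun ε hε => ?_
  filter_upwards [self_mem_nhdsWithin, hbound.eventually_lt_const hε] with z hz hzε τ hτ
  rw [Pi.zero_apply, dist_zero_left, norm_of_nonneg (heatPoissonKernel_nonneg hz.le τ)]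
  exact (heatPoissonKernel_le hα hz.le hδ hτ).trans_lt hzε

lemma heatPoissonKernel_eq_rescale (α τ : ℝ) (hz : 0 < z) :
    heatPoissonKernel α z τ = (z ^ 2)⁻¹ * heatPoissonKernel α 1 (τ / z ^ 2) := by
  rcases le_or_gt τ 0 with hτ | hτ
  · have hτz : τ / z ^ 2 ≤ 0 := div_nonpos_of_nonpos_of_nonneg hτ (sq_nonneg z)
    simp [heatPoissonKernel, Ustar_of_nonpos hτ, Ustar_of_nonpos hτz]
  · have hsqrt : √(α / (4 * π * (τ / z ^ 2))) = z * √(α / (4 * π * τ)) := by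
      have hscale : α / (4 * π * (τ / z ^ 2)) = z ^ 2 * (α / (4 * π * τ)) := by field_simp
      rw [hscale, sqrt_mul (sq_nonneg z), sqrt_sq hz.le]
    have hexponent : -(α * 1 ^ 2) / (4 * (τ / z ^ 2)) = -(α * z ^ 2) / (4 * τ) := by
      field_simp
    rw [heatPoissonKernel, heatPoissonKernel, Ustar_of_pos hτ, Ustar_of_pos (by positivity),
      hsqrt, hexponent]
    field_simp

lemma heatPoissonKernel_comp_rpow_neg_two {u : ℝ} (hu : 0 < u) :
    (|(-2 : ℝ)| * u ^ (-2 - 1 : ℝ)) • heatPoissonKernel α z (u ^ (-2 : ℝ)) =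
      2 * z * √(α / (4 * π)) * rexp (-(α * z ^ 2 / 4) * u ^ 2) := by
  have hpow₂ : u ^ (-2 : ℝ) = (u ^ 2)⁻¹ := by exact_mod_cast rpow_neg hu.le 2
  have hpow₃ : u ^ (-2 - 1 : ℝ) = (u ^ 3)⁻¹ := by
    rw [rpow_sub_one hu.ne', hpow₂]
    field_simp
  have hsqrt : √(α / (4 * π * (u ^ 2)⁻¹)) = u * √(α / (4 * π)) := by
    have hscale : α / (4 * π * (u ^ 2)⁻¹) = u ^ 2 * (α / (4 * π)) := by field_simp
    rw [hscale, sqrt_mul (sq_nonneg u), sqrt_sq hu.le]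
  have hexponent : -(α * z ^ 2) / (4 * (u ^ 2)⁻¹) = -(α * z ^ 2 / 4) * u ^ 2 := by
    field_simp
  rw [hpow₂, hpow₃, heatPoissonKernel, Ustar_of_pos (by positivity), hsqrt, hexponent,
    abs_neg, abs_two, smul_eq_mul]
  field_simp

lemma integral_Ioi_heatPoissonKernel (hα : 0 < α) (hz : 0 < z) :
    ∫ τ in Set.Ioi 0, heatPoissonKernel α z τ = 1 := by
  have hsqrt : √(α / (4 * π)) * √(π / (α * z ^ 2 / 4)) = z⁻¹ := by
    have hprod : α / (4 * π) * (π / (α * z ^ 2 / 4)) = z⁻¹ ^ 2 := by field_simp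
    rw [← sqrt_mul (by positivity), hprod, sqrt_sq (inv_nonneg.2 hz.le)]
  calc ∫ τ in Set.Ioi 0, heatPoissonKernel α z τ
      = ∫ u in Set.Ioi (0 : ℝ),
          2 * z * √(α / (4 * π)) * rexp (-(α * z ^ 2 / 4) * u ^ 2) := by
        rw [← integral_comp_rpow_Ioi _ (neg_ne_zero.2 two_ne_zero)]
        exact setIntegral_congr_fun measurableSet_Ioi fun u hu =>
          heatPoissonKernel_comp_rpow_neg_two hu
    _ = z * (√(α / (4 * π)) * √(π / (α * z ^ 2 / 4))) := by
        rw [MeasureTheory.integral_const_mul, integral_gaussian_Ioi]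
        ring
    _ = 1 := by rw [hsqrt, mul_inv_cancel₀ hz.ne']

lemma integrableOn_Ioi_heatPoissonKernel (hα : 0 < α) (hz : 0 < z) :
    IntegrableOn (heatPoissonKernel α z) (Set.Ioi 0) :=
  Integrable.of_integral_ne_zero <| by
    rw [integral_Ioi_heatPoissonKernel hα hz]
    exact one_ne_zero

lemma intervalIntegral_heatPoissonKernel_eq_rescale (α δ : ℝ) (hz : 0 < z) :
    ∫ τ in (0 : ℝ)..δ, heatPoissonKernel α z τ =
      ∫ σ in (0 : ℝ)..δ / z ^ 2, heatPoissonKernel α 1 σ := by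
  simp_rw [heatPoissonKernel_eq_rescale α _ hz]
  rw [intervalIntegral.integral_const_mul, inv_mul_integral_comp_div, zero_div]

lemma tendsto_intervalIntegral_heatPoissonKernel (hα : 0 < α) (hδ : 0 < δ) :
    Tendsto (fun z => ∫ τ in (0 : ℝ)..δ, heatPoissonKernel α z τ) (𝓝[>] 0) (𝓝 1) := by
  have hsq : Tendsto (fun z : ℝ => z ^ 2) (𝓝[>] 0) (𝓝[>] 0) :=
    tendsto_nhdsWithin_iff.2
      ⟨((continuous_pow 2).tendsto' 0 0 (zero_pow two_ne_zero)).mono_left nhdsWithin_le_nhds,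
        eventually_mem_nhdsWithin.mono fun _ hz => Set.mem_Ioi.2 (pow_pos hz 2)⟩
  have hupper : Tendsto (fun z : ℝ => δ / z ^ 2) (𝓝[>] 0) atTop :=
    hsq.inv_tendsto_nhdsGT_zero.const_mul_atTop hδ
  have hmass := intervalIntegral_tendsto_integral_Ioi 0
    (integrableOn_Ioi_heatPoissonKernel hα one_pos) hupper
  rw [integral_Ioi_heatPoissonKernel hα one_pos] at hmass
  refine hmass.congr' ?_
  filter_upwards [self_mem_nhdsWithin] with z hz
  exact (intervalIntegral_heatPoissonKernel_eq_rescale α δ hz).symm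

end Kernel

section BoundaryLimit

variable {E : Type*} [NormedAddCommGroup E] [NormedSpace ℝ E] [CompleteSpace E]
  {α a t : ℝ} {f : ℝ → E} {L : E}

theorem tendsto_integral_heatPoissonKernel_smul (hα : 0 < α) (hat : a < t)
    (hf : IntervalIntegrable f volume a t) (hL : Tendsto f (𝓝[<] t) (𝓝 L)) :
    Tendsto (fun z => ∫ s in a..t, heatPoissonKernel α z (t - s) • f s) (𝓝[>] 0) (𝓝 L) := by
  simp_rw [integral_of_le hat.le, integral_Ioc_eq_integral_Ioo]
  refine tendsto_setIntegral_peak_smul_of_integrableOn_of_tendsto (x₀ := t)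
    measurableSet_Ioo measurableSet_Ioo subset_rfl self_mem_nhdsWithin measure_Ioo_lt_top.ne
    ?nonneg ?away ?mass ?measurable ?integrable ?limit
  case nonneg =>
    filter_upwards [self_mem_nhdsWithin] with z hz s _
    exact heatPoissonKernel_nonneg hz.le (t - s)
  case away =>
    intro u hu htu
    obtain ⟨δ, hδ, hball⟩ := Metric.isOpen_iff.1 hu t htu
    refine ((tendstoUniformlyOn_heatPoissonKernel hα.le hδ).comp (t - ·)).mono
      fun s ⟨⟨_, hst⟩, hsu⟩ => ?_
    by_contra hlt
    refine hsu (hball ?_)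
    rw [Metric.mem_ball, dist_comm, Real.dist_eq, abs_of_pos (sub_pos.2 hst)]
    exact not_le.1 hlt
  case mass =>
    simp_rw [← integral_Ioc_eq_integral_Ioo, ← integral_of_le hat.le,
      integral_comp_sub_left (heatPoissonKernel α _), sub_self]
    exact tendsto_intervalIntegral_heatPoissonKernel hα (sub_pos.2 hat)
  case measurable =>
    exact Eventually.of_forall fun z =>
      ((measurable_heatPoissonKernel α z).comp
        (measurable_const.sub measurable_id)).aestronglyMeasurable
  case integrable =>
    exact (intervalIntegrable_iff_integrableOn_Ioo_of_le hat.le).1 hf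
  case limit =>
    rwa [nhdsWithin_Ioo_eq_nhdsLT hat]

theorem double_layer_potential_jump_relation_general (hα : 0 < α) (hat : a < t)
    (hf : IntervalIntegrable f volume a t) (hL : Tendsto f (𝓝[<] t) (𝓝 L)) :
    Tendsto (fun z => ∫ s in a..t, ((z / (2 * (t - s))) * Ustar α z (t - s)) • f s)
      (𝓝[>] 0) (𝓝 ((1 / 2 : ℝ) • L)) := by
  have hkernel (z τ : ℝ) : z / (2 * τ) * Ustar α z τ = 1 / 2 * heatPoissonKernel α z τ := by
    rw [heatPoissonKernel]
    ring
  simp_rw [hkernel, mul_smul, intervalIntegral.integral_smul]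
  exact (tendsto_integral_heatPoissonKernel_smul hα hat hf hL).const_smul (1 / 2 : ℝ)

end BoundaryLimit

/-- Jump relation of the double layer heat potential: for continuous `h` and
`t ∈ (0,T]`, the one-sided limit as `z → 0⁺` of
`∫_0^t (z/(2(t−s)))·U*(z, t−s) h(s) ds` equals `(1/2)·h(t)`. -/
theorem double_layer_potential_jump_relation (α T : ℝ) (hα : 0 < α) (hT : 0 < T)
    (h : ℝ → ℝ) (hh : ContinuousOn h (Set.Icc 0 T))
    (t : ℝ) (ht : 0 < t) (htT : t ≤ T) :
    Tendsto (fun z => ∫ s in (0:ℝ)..t, (z / (2 * (t - s))) * Ustar α z (t - s) * h s)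
      (𝓝[>] 0) (𝓝 ((1 / 2) * h t)) := by
  have hcont : ContinuousOn h (Set.Icc 0 t) := hh.mono (Set.Icc_subset_Icc_right htT)
  have hleft : Tendsto h (𝓝[<] t) (𝓝 (h t)) :=
    ((continuousWithinAt_Icc_iff_Iic ht).1 (hcont t ⟨ht.le, le_rfl⟩)).mono Set.Iio_subset_Iic_self
  exact double_layer_potential_jump_relation_general hα ht
    (hcont.intervalIntegrable_of_Icc ht.le) hleft
end

section
/- Let X and Y be real normed vector spaces. Let a : X × X → ℝ be symmetric bilinear with c₁^A·‖v‖² ≤ a(v,v) and |a(u,v)| ≤ c₂^A·‖u‖·‖v‖; let b : Y × Y → ℝ be symmetric bilinear with c₁^B·‖w‖² ≤ b(w,w) and |b(u,w)| ≤ c₂^B·‖u‖·‖w‖; let d : X × Y → ℝ be bilinear with |d(v,w)| ≤ c₂^M·‖v‖_X·‖w‖_Y, all constants positive. Let φ₁, …, φ_N ∈ X and ψ₁, …, ψ_N ∈ Y be linearly independent with X_h = span{φ_k}, Y_h = span{ψ_i}, and assume the discrete inf-sup condition: sup over 0 ≠ v_h ∈ Y_h of d(τ_h, v_h)/‖v_h‖_Y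 ≥ c₁^M·‖τ_h‖_X for every τ_h ∈ X_h, with c₁^M > 0. Define the matrices A[ℓ,k] = a(φ_k, φ_ℓ), B[ℓ,k] = b(ψ_k, ψ_ℓ), M[ℓ,k] = d(φ_k, ψ_ℓ). Then M is invertible, B is positive definite, and the spectral equivalence inequalities (c₁^A·c₁^B/(c₂^M)²)·xᵀ(MᵀB⁻¹M)x ≤ xᵀAx ≤ (c₂^A·c₂^B/(c₁^M)²)·xᵀ(MᵀB⁻¹M)x hold for all x ∈ ℝ^N. -/
open Matrix

/-!
Put `u = ∑ xₖ φₖ` and let `w` in the span of the `ψ ℓ` represent the functional `d u` there with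
respect to `b`. The coordinates of `w` are `B⁻¹ M x`, so `xᵀ Mᵀ B⁻¹ M x = b w w`: the matrix
`Mᵀ B⁻¹ M` measures the functional `d u` in the norm dual to the energy norm of `b`. Ellipticity
and boundedness of `b` compare this with the dual norm of `d u` on the span, which lies between
`c₁M * ‖u‖` (inf-sup condition) and `c₂M * ‖u‖` (boundedness of `d`), while `a u u` is comparable
with `‖u‖ ^ 2`.
-/

section GalerkinMatrix

variable {R E F ι κ : Type*} [CommRing R] [AddCommGroup E] [Module R E] [AddCommGroup F]
  [Module R F]

/-- The Galerkin matrix of the bilinear form `d` with respect to the families `φ` of trial vectors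
and `ψ` of test vectors. Rows are indexed by test vectors, so that `d u v = yᵀ M x` when `u` has
coordinates `x` and `v` has coordinates `y`. -/
def galerkinMatrix (d : E →ₗ[R] F →ₗ[R] R) (φ : ι → E) (ψ : κ → F) : Matrix κ ι R :=
  Matrix.of fun ℓ k => d (φ k) (ψ ℓ)

variable [Fintype ι] [Fintype κ]

theorem dotProduct_galerkinMatrix_mulVec (d : E →ₗ[R] F →ₗ[R] R) (φ : ι → E) (ψ : κ → F)
    (x : ι → R) (y : κ → R) :
    y ⬝ᵥ galerkinMatrix d φ ψ *ᵥ x =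
      d (Fintype.linearCombination R φ x) (Fintype.linearCombination R ψ y) := by
  simp only [galerkinMatrix, dotProduct, mulVec, Matrix.of_apply, Fintype.linearCombination_apply,
    map_sum, LinearMap.sum_apply, map_smul, LinearMap.smul_apply, smul_eq_mul, mul_comm (d _ _)]

theorem mem_span_range_iff_exists_linearCombination_eq {φ : ι → E} {u : E} :
    u ∈ Submodule.span R (Set.range φ) ↔ ∃ x, Fintype.linearCombination R φ x = u := by
  rw [← Fintype.range_linearCombination, LinearMap.mem_range]

theorem exists_representer_dotProduct_transpose_mul_inv_mul_mulVec [DecidableEq κ]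
    (b : F →ₗ[R] F →ₗ[R] R) (d : E →ₗ[R] F →ₗ[R] R) (φ : ι → E) {ψ : κ → F}
    (hB : IsUnit (galerkinMatrix b ψ ψ)) (x : ι → R) :
    ∃ w ∈ Submodule.span R (Set.range ψ),
      (∀ v ∈ Submodule.span R (Set.range ψ), d (Fintype.linearCombination R φ x) v = b w v) ∧
      x ⬝ᵥ ((galerkinMatrix d φ ψ)ᵀ * (galerkinMatrix b ψ ψ)⁻¹ * galerkinMatrix d φ ψ) *ᵥ x =
        b w w := by
  set B := galerkinMatrix b ψ ψ
  set M := galerkinMatrix d φ ψ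
  set y := B⁻¹ *ᵥ M *ᵥ x with hy
  have hBy : B *ᵥ y = M *ᵥ x := by
    rw [hy, mulVec_mulVec, mul_nonsing_inv _ ((isUnit_iff_isUnit_det _).1 hB), one_mulVec]
  refine ⟨Fintype.linearCombination R ψ y,
    mem_span_range_iff_exists_linearCombination_eq.2 ⟨y, rfl⟩, ?_, ?_⟩
  · intro v hv
    obtain ⟨z, rfl⟩ := mem_span_range_iff_exists_linearCombination_eq.1 hv
    rw [← dotProduct_galerkinMatrix_mulVec, ← dotProduct_galerkinMatrix_mulVec, hBy]
  · calc x ⬝ᵥ (Mᵀ * B⁻¹ * M) *ᵥ x = x ⬝ᵥ Mᵀ *ᵥ y := by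
          rw [hy, mulVec_mulVec, mulVec_mulVec, Matrix.mul_assoc]
      _ = y ⬝ᵥ B *ᵥ y := by rw [dotProduct_transpose_mulVec, hBy]
      _ = _ := dotProduct_galerkinMatrix_mulVec b ψ ψ y y

end GalerkinMatrix

theorem posDef_galerkinMatrix {F κ : Type*} [Finite κ] [AddCommGroup F] [Module ℝ F]
    {b : F →ₗ[ℝ] F →ₗ[ℝ] ℝ} {ψ : κ → F} (hsymm : b.IsSymm) (hpos : ∀ w, w ≠ 0 → 0 < b w w)
    (hψ : LinearIndependent ℝ ψ) : (galerkinMatrix b ψ ψ).PosDef := by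
  have := Fintype.ofFinite κ
  refine .of_dotProduct_mulVec_pos (Matrix.IsHermitian.ext fun i j => hsymm.eq _ _) fun x hx => ?_
  rw [star_trivial, dotProduct_galerkinMatrix_mulVec]
  exact hpos _ ((map_ne_zero_iff _ hψ.fintypeLinearCombination_injective).2 hx)

section DualNorm

variable {Y : Type*} [SeminormedAddCommGroup Y] [NormedSpace ℝ Y]

/-- The dual norm of the functional `f` restricted to the subspace `W`. It is a supremum of real
numbers, hence `0` if `W` is trivial or if the quotients are unbounded. -/
noncomputable def subspaceDualNorm (W : Submodule ℝ Y) (f : Y →ₗ[ℝ] ℝ) : ℝ :=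
  sSup {r : ℝ | ∃ v ∈ W, v ≠ 0 ∧ r = f v / ‖v‖}

theorem subspaceDualNorm_le {W : Submodule ℝ Y} {f : Y →ₗ[ℝ] ℝ} {c : ℝ} (hc : 0 ≤ c)
    (hf : ∀ v ∈ W, f v ≤ c * ‖v‖) : subspaceDualNorm W f ≤ c := by
  refine Real.sSup_le ?_ hc
  rintro _ ⟨v, hv, -, rfl⟩
  exact div_le_of_le_mul₀ (norm_nonneg v) hc (hf v hv)

theorem subspaceDualNorm_le_sqrt_of_representer {W : Submodule ℝ Y} {f : Y →ₗ[ℝ] ℝ}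
    {b : Y →ₗ[ℝ] Y →ₗ[ℝ] ℝ} {c : ℝ} {w : Y} (hsymm : b.IsSymm) (hnonneg : ∀ v, 0 ≤ b v v)
    (hbdd : ∀ v ∈ W, b v v ≤ c * ‖v‖ ^ 2) (hw : ∀ v ∈ W, f v = b w v) :
    subspaceDualNorm W f ≤ √(c * b w w) := by
  refine subspaceDualNorm_le (Real.sqrt_nonneg _) fun v hv => ?_
  have cauchy_schwarz : b w v ^ 2 ≤ b w w * b v v :=
    LinearMap.BilinForm.apply_sq_le_of_symm b hnonneg hsymm w v
  calc f v = b w v := hw v hv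
    _ ≤ √(b w w * b v v) := Real.le_sqrt_of_sq_le cauchy_schwarz
    _ ≤ √(c * b w w * ‖v‖ ^ 2) := by
      rw [mul_comm c, mul_assoc]
      gcongr
      exacts [hnonneg w, hbdd v hv]
    _ = √(c * b w w) * ‖v‖ := by
      rw [Real.sqrt_mul' _ (sq_nonneg _), Real.sqrt_sq (norm_nonneg v)]

end DualNorm

theorem mulVec_galerkinMatrix_injective_of_infsup {X Y ι κ : Type*} [Fintype ι] [Finite κ]
    [NormedAddCommGroup X] [NormedSpace ℝ X] [SeminormedAddCommGroup Y] [NormedSpace ℝ Y]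
    {d : X →ₗ[ℝ] Y →ₗ[ℝ] ℝ} {φ : ι → X} {ψ : κ → Y} {c : ℝ} (hc : 0 < c)
    (hφ : LinearIndependent ℝ φ)
    (hinfsup : ∀ u ∈ Submodule.span ℝ (Set.range φ),
      c * ‖u‖ ≤ subspaceDualNorm (Submodule.span ℝ (Set.range ψ)) (d u)) :
    Function.Injective (galerkinMatrix d φ ψ).mulVec := by
  have := Fintype.ofFinite κ
  rw [← coe_mulVecLin, injective_iff_map_eq_zero]
  intro x hx
  set u := Fintype.linearCombination ℝ φ x
  have hdu : ∀ v ∈ Submodule.span ℝ (Set.range ψ), d u v ≤ 0 * ‖v‖ := by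
    intro v hv
    obtain ⟨y, rfl⟩ := mem_span_range_iff_exists_linearCombination_eq.1 hv
    rw [← dotProduct_galerkinMatrix_mulVec, ← mulVecLin_apply, hx, dotProduct_zero, zero_mul]
  have hu : c * ‖u‖ ≤ 0 :=
    (hinfsup u (mem_span_range_iff_exists_linearCombination_eq.2 ⟨x, rfl⟩)).trans
      (subspaceDualNorm_le le_rfl hdu)
  have hu₀ : u = 0 := norm_le_zero_iff.1 (nonpos_of_mul_nonpos_right hu hc)
  exact (map_eq_zero_iff _ hφ.fintypeLinearCombination_injective).1 hu₀

theorem mul_le_sq_of_mul_sq_le_of_le_mul {c s t K : ℝ} (hc : 0 ≤ c) (hcs : c * t ^ 2 ≤ s)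
    (hsK : s ≤ K * t) : c * s ≤ K ^ 2 := by
  have young : 2 * K * (c * t) ≤ K ^ 2 + (c * t) ^ 2 := two_mul_le_add_sq K (c * t)
  have hKt : c * s ≤ K * (c * t) := by linarith [mul_le_mul_of_nonneg_left hsK hc]
  have hct : (c * t) ^ 2 ≤ c * s := by linarith [mul_le_mul_of_nonneg_left hcs hc]
  linarith

theorem apply_self_le_of_abs_apply_le {X : Type*} [SeminormedAddCommGroup X]
    [NormedSpace ℝ X] {a : X →ₗ[ℝ] X →ₗ[ℝ] ℝ} {c : ℝ}
    (ha : ∀ u v, |a u v| ≤ c * ‖u‖ * ‖v‖) (v : X) : a v v ≤ c * ‖v‖ ^ 2 :=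
  calc a v v ≤ |a v v| := le_abs_self _
    _ ≤ c * ‖v‖ * ‖v‖ := ha v v
    _ = c * ‖v‖ ^ 2 := by ring

theorem operator_preconditioning_spectral_equivalence_general {X Y ι κ : Type*}
    [NormedAddCommGroup X] [NormedSpace ℝ X] [NormedAddCommGroup Y] [NormedSpace ℝ Y]
    [Fintype ι] [Fintype κ] [DecidableEq κ]
    {a : X →ₗ[ℝ] X →ₗ[ℝ] ℝ} {b : Y →ₗ[ℝ] Y →ₗ[ℝ] ℝ} {d : X →ₗ[ℝ] Y →ₗ[ℝ] ℝ}
    {c₁A c₂A c₁B c₂B c₁M c₂M : ℝ} (hc₁A : 0 ≤ c₁A) (hc₂A : 0 ≤ c₂A) (hc₁B : 0 < c₁B)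
    (hc₂B : 0 ≤ c₂B) (hc₁M : 0 < c₁M) (hc₂M : 0 < c₂M)
    (ha_ell : ∀ v, c₁A * ‖v‖ ^ 2 ≤ a v v) (ha_bdd : ∀ v, a v v ≤ c₂A * ‖v‖ ^ 2)
    (hb_symm : b.IsSymm)
    (hb_ell : ∀ w, c₁B * ‖w‖ ^ 2 ≤ b w w) (hb_bdd : ∀ w, b w w ≤ c₂B * ‖w‖ ^ 2)
    (hd_bdd : ∀ v w, d v w ≤ c₂M * ‖v‖ * ‖w‖) {φ : ι → X} {ψ : κ → Y}
    (hφ : LinearIndependent ℝ φ) (hψ : LinearIndependent ℝ ψ)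
    (hinfsup : ∀ u ∈ Submodule.span ℝ (Set.range φ),
      c₁M * ‖u‖ ≤ subspaceDualNorm (Submodule.span ℝ (Set.range ψ)) (d u)) :
    let A := galerkinMatrix a φ φ
    let B := galerkinMatrix b ψ ψ
    let M := galerkinMatrix d φ ψ
    Function.Injective M.mulVec ∧ B.PosDef ∧
    ∀ x : ι → ℝ,
      (c₁A * c₁B / c₂M ^ 2) * (x ⬝ᵥ (Mᵀ * B⁻¹ * M) *ᵥ x) ≤ x ⬝ᵥ A *ᵥ x ∧
      x ⬝ᵥ A *ᵥ x ≤ (c₂A * c₂B / c₁M ^ 2) * (x ⬝ᵥ (Mᵀ * B⁻¹ * M) *ᵥ x) := by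
  intro A B M
  have hb_nonneg : ∀ w, 0 ≤ b w w := fun w => le_trans (by positivity) (hb_ell w)
  have hb_pos : ∀ w, w ≠ 0 → 0 < b w w := fun w hw =>
    (mul_pos hc₁B (pow_pos (norm_pos_iff.2 hw) 2)).trans_le (hb_ell w)
  have hB : B.PosDef := posDef_galerkinMatrix hb_symm hb_pos hψ
  refine ⟨mulVec_galerkinMatrix_injective_of_infsup hc₁M hφ hinfsup, hB, fun x => ?_⟩
  obtain ⟨w, hwψ, hw, hxw⟩ :=
    exists_representer_dotProduct_transpose_mul_inv_mul_mulVec b d φ hB.isUnit x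
  rw [hxw, dotProduct_galerkinMatrix_mulVec]
  have hu := hinfsup _ (mem_span_range_iff_exists_linearCombination_eq.2 ⟨x, rfl⟩)
  set u := Fintype.linearCombination ℝ φ x
  have hlower : c₁B * b w w ≤ (c₂M * ‖u‖) ^ 2 :=
    mul_le_sq_of_mul_sq_le_of_le_mul hc₁B.le (hb_ell w) (hw w hwψ ▸ hd_bdd u w)
  have hupper : (c₁M * ‖u‖) ^ 2 ≤ c₂B * b w w :=
    (Real.le_sqrt (by positivity) (mul_nonneg hc₂B (hb_nonneg w))).1 <|
      hu.trans (subspaceDualNorm_le_sqrt_of_representer hb_symm hb_nonneg (fun v _ => hb_bdd v) hw)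
  constructor
  · rw [div_mul_eq_mul_div, div_le_iff₀ (by positivity)]
    calc c₁A * c₁B * b w w = c₁A * (c₁B * b w w) := by ring
      _ ≤ c₁A * (c₂M * ‖u‖) ^ 2 := by gcongr
      _ = c₁A * ‖u‖ ^ 2 * c₂M ^ 2 := by ring
      _ ≤ a u u * c₂M ^ 2 := by gcongr; exact ha_ell u
  · rw [div_mul_eq_mul_div, le_div_iff₀ (by positivity)]
    calc a u u * c₁M ^ 2 ≤ c₂A * ‖u‖ ^ 2 * c₁M ^ 2 := by gcongr; exact ha_bdd u
      _ = c₂A * (c₁M * ‖u‖) ^ 2 := by ring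
      _ ≤ c₂A * (c₂B * b w w) := by gcongr
      _ = c₂A * c₂B * b w w := by ring

/-- Abstract operator-preconditioning theorem (spectral equivalence): let `a`
be a symmetric, bounded, elliptic bilinear form on `X`, `b` a symmetric,
bounded, elliptic bilinear form on `Y`, and `d : X × Y → ℝ` a bounded pairing
satisfying a discrete inf-sup condition on `X_h × Y_h` with constant `c₁^M`.
Then the coupling matrix `M` is invertible, `B` is positive definite, and
`(c₁^A·c₁^B/(c₂^M)²)·xᵀ(MᵀB⁻¹M)x ≤ xᵀAx ≤ (c₂^A·c₂^B/(c₁^M)²)·xᵀ(MᵀB⁻¹M)x`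
for all `x ∈ ℝ^N`. -/
theorem operator_preconditioning_spectral_equivalence
    (X Y : Type*) [NormedAddCommGroup X] [NormedSpace ℝ X]
    [NormedAddCommGroup Y] [NormedSpace ℝ Y]
    (a : X →ₗ[ℝ] X →ₗ[ℝ] ℝ) (b : Y →ₗ[ℝ] Y →ₗ[ℝ] ℝ) (d : X →ₗ[ℝ] Y →ₗ[ℝ] ℝ)
    (c₁A c₂A c₁B c₂B c₁M c₂M : ℝ)
    (hc₁A : 0 < c₁A) (hc₂A : 0 < c₂A) (hc₁B : 0 < c₁B) (hc₂B : 0 < c₂B)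
    (hc₁M : 0 < c₁M) (hc₂M : 0 < c₂M)
    (ha_symm : ∀ u v : X, a u v = a v u)
    (ha_ell : ∀ v : X, c₁A * ‖v‖ ^ 2 ≤ a v v)
    (ha_bdd : ∀ u v : X, |a u v| ≤ c₂A * ‖u‖ * ‖v‖)
    (hb_symm : ∀ u w : Y, b u w = b w u)
    (hb_ell : ∀ w : Y, c₁B * ‖w‖ ^ 2 ≤ b w w)
    (hb_bdd : ∀ u w : Y, |b u w| ≤ c₂B * ‖u‖ * ‖w‖)
    (hd_bdd : ∀ (v : X) (w : Y), |d v w| ≤ c₂M * ‖v‖ * ‖w‖)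
    (N : ℕ) (φ : Fin N → X) (ψ : Fin N → Y)
    (hφ : LinearIndependent ℝ φ) (hψ : LinearIndependent ℝ ψ)
    (hinfsup : ∀ τh ∈ Submodule.span ℝ (Set.range φ),
      c₁M * ‖τh‖ ≤ sSup {r : ℝ |
        ∃ vh ∈ Submodule.span ℝ (Set.range ψ), vh ≠ 0 ∧ r = d τh vh / ‖vh‖})
    (A B M : Matrix (Fin N) (Fin N) ℝ)
    (hA : ∀ ℓ k, A ℓ k = a (φ k) (φ ℓ))
    (hB : ∀ ℓ k, B ℓ k = b (ψ k) (ψ ℓ))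
    (hM : ∀ ℓ k, M ℓ k = d (φ k) (ψ ℓ)) :
    IsUnit M ∧ B.PosDef ∧
    ∀ x : Fin N → ℝ,
      (c₁A * c₁B / c₂M ^ 2) * (x ⬝ᵥ (Mᵀ * B⁻¹ * M).mulVec x) ≤ x ⬝ᵥ A.mulVec x ∧
      x ⬝ᵥ A.mulVec x ≤ (c₂A * c₂B / c₁M ^ 2) * (x ⬝ᵥ (Mᵀ * B⁻¹ * M).mulVec x) := by
  obtain rfl : A = galerkinMatrix a φ φ := Matrix.ext hA
  obtain rfl : B = galerkinMatrix b ψ ψ := Matrix.ext hB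
  obtain rfl : M = galerkinMatrix d φ ψ := Matrix.ext hM
  rw [← mulVec_injective_iff_isUnit]
  exact operator_preconditioning_spectral_equivalence_general hc₁A.le hc₂A.le hc₁B hc₂B.le hc₁M
    hc₂M ha_ell (apply_self_le_of_abs_apply_le ha_bdd) ⟨hb_symm⟩ hb_ell
    (apply_self_le_of_abs_apply_le hb_bdd) (fun v w => (le_abs_self _).trans (hd_bdd v w)) hφ hψ
    hinfsup
end
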